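/- Let y : [0,1] \to [0,\varepsilon) be C^1 with y(0) = 0 and y'(v) \ge c R_\varepsilon(y(v)) - f(v) for all v, where R_\varepsilon(y) = \sqrt{y(2\varepsilon - y)}/(\varepsilon - y), c > 0, and f : [0,1] \to \mathbb{R} is continuous with f \le 0 on [0,\alpha]. Let \bar\varepsilon = \int_0^1 f^-, let \alpha_0 \in (0,\alpha) satisfy \int_0^{\alpha_0} f^- = \bar\varepsilon/2, and suppose y(v) \ge -\int_0^v f \ge \bar\varepsilon/2 for v \in [\alpha_0, \alpha]. Then y(\alpha) \ge \bar\varepsilon/2 + c \frac{\sqrt{(\bar\varepsilon/2)(2\varepsilon - \bar\varepsilon/2)}}{\varepsilon - \bar\varepsilon/2} (\alpha - \alpha_0) + \int_{\alpha_0}^{\alpha} f^-(s) ds. -/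

import Mathlib

open Set intervalIntegral

/-! Since `R_ε` is increasing below `ε`, a bound `m ≤ y` turns the nonlinear inequality
`y' ≥ c R_ε(y) - f` into `y' ≥ c R_ε(m) - f`, whose right-hand side no longer involves `y` and can
be integrated. -/

/-- The function `R_ε(y) = √(y (2ε - y)) / (ε - y)` of the critical-speed equation: for
`0 ≤ y < ε`, it is the slope `q ≥ 0` at which `ε (1 - 1 / √(1 + q²)) = y`. Its values outside
`[0, ε)` have no meaning. -/
noncomputable def energySlope (ε y : ℝ) : ℝ :=
  √(y * (2 * ε - y)) / (ε - y)

lemma monotoneOn_energySlope (ε : ℝ) : MonotoneOn (energySlope ε) (Ico 0 ε) := by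
  rintro u ⟨-, hu⟩ v ⟨-, hv⟩ huv
  have radicand_le : u * (2 * ε - u) ≤ v * (2 * ε - v) := by
    have : 0 ≤ (v - u) * ((ε - u) + (ε - v)) := mul_nonneg (by linarith) (by linarith)
    linarith
  exact div_le_div₀ (Real.sqrt_nonneg _) (Real.sqrt_le_sqrt radicand_le) (by linarith) (by linarith)

lemma integral_max_neg_zero_of_nonpos {f : ℝ → ℝ} {a b : ℝ} (hf : ∀ x ∈ uIcc a b, f x ≤ 0) :
    ∫ x in a..b, max (-f x) 0 = -∫ x in a..b, f x := by
  rw [← integral_neg]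
  exact integral_congr fun x hx ↦ max_eq_left (neg_nonneg.2 (hf x hx))

lemma add_mul_sub_integral_le_of_sub_le_deriv_right {f y y' : ℝ → ℝ} {a b k : ℝ}
    (hab : a ≤ b) (hf : IntervalIntegrable f MeasureTheory.volume a b)
    (hy : ContinuousOn y (Icc a b))
    (hy' : ∀ v ∈ Ioo a b, HasDerivWithinAt y (y' v) (Ioi v) v)
    (hle : ∀ v ∈ Ioo a b, k - f v ≤ y' v) :
    y a + k * (b - a) - ∫ v in a..b, f v ≤ y b := by
  have hint : IntervalIntegrable (fun v ↦ k - f v) MeasureTheory.volume a b :=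
    intervalIntegrable_const.sub hf
  have integral_le : ∫ v in a..b, (k - f v) ≤ y b - y a :=
    integral_le_sub_of_hasDeriv_right_of_le hab hy hy'
      ((intervalIntegrable_iff_integrableOn_Icc_of_le hab).1 hint) hle
  rw [integral_sub intervalIntegrable_const hf, integral_const, smul_eq_mul] at integral_le
  linarith

theorem stmt_16_general {f y y' : ℝ → ℝ} {a b c ε m : ℝ} (hab : a ≤ b) (hc : 0 ≤ c)
    (hm : 0 ≤ m) (hf : IntervalIntegrable f MeasureTheory.volume a b)
    (hy : ContinuousOn y (Icc a b))
    (hy' : ∀ v ∈ Ioo a b, HasDerivWithinAt y (y' v) (Ioi v) v)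
    (hsub : ∀ v ∈ Ioo a b, c * energySlope ε (y v) - f v ≤ y' v)
    (hyrange : ∀ v ∈ Icc a b, y v ∈ Ico m ε) :
    m + c * energySlope ε m * (b - a) - ∫ v in a..b, f v ≤ y b := by
  have hya := hyrange a (left_mem_Icc.2 hab)
  have slope_le (v) (hv : v ∈ Ioo a b) : c * energySlope ε m ≤ c * energySlope ε (y v) := by
    have hyv := hyrange v (Ioo_subset_Icc_self hv)
    exact mul_le_mul_of_nonneg_left
      (monotoneOn_energySlope ε ⟨hm, hya.1.trans_lt hya.2⟩ ⟨hm.trans hyv.1, hyv.2⟩ hyv.1) hc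
  have le_yb := add_mul_sub_integral_le_of_sub_le_deriv_right hab hf hy hy' fun v hv ↦
    (sub_le_sub_right (slope_le v hv) (f v)).trans (hsub v hv)
  linarith [hya.1]

/-- Key quantitative bound in the proof that `c*_ε → 0` as `ε → ε̄`: if `y` is a C¹
subsolution of the critical-speed first-order equation with `y ≥ -∫₀^· f ≥ ε̄/2`
on `[α₀, α]`, then `y(α)` exceeds the stated lower bound. -/
theorem stmt_16
    (f y y' : ℝ → ℝ) (α α₀ c ε : ℝ)
    (hf : ContinuousOn f (Icc 0 1))
    (hα : α ∈ Ioo (0 : ℝ) 1) (hα₀ : α₀ ∈ Ioo (0 : ℝ) α)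
    (hc : 0 < c)
    (hεbar : (∫ s in (0:ℝ)..1, max (-f s) 0) < ε)
    (hfneg : ∀ v ∈ Icc (0 : ℝ) α, f v ≤ 0)
    (hα₀def : (∫ s in (0:ℝ)..α₀, max (-f s) 0) = (∫ s in (0:ℝ)..1, max (-f s) 0) / 2)
    (hy0 : y 0 = 0)
    (hyrange : ∀ v ∈ Icc (0 : ℝ) 1, 0 ≤ y v ∧ y v < ε)
    (hyderiv : ∀ v ∈ Icc (0 : ℝ) 1, HasDerivWithinAt y (y' v) (Icc (0 : ℝ) 1) v)
    (hsub : ∀ v ∈ Icc (0 : ℝ) 1,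
      c * (Real.sqrt (y v * (2 * ε - y v)) / (ε - y v)) - f v ≤ y' v)
    (hlower : ∀ v ∈ Icc α₀ α,
      (∫ s in (0:ℝ)..1, max (-f s) 0) / 2 ≤ -∫ s in (0:ℝ)..v, f s ∧
      (-∫ s in (0:ℝ)..v, f s) ≤ y v) :
    (∫ s in (0:ℝ)..1, max (-f s) 0) / 2
      + c * (Real.sqrt (((∫ s in (0:ℝ)..1, max (-f s) 0) / 2) *
            (2 * ε - (∫ s in (0:ℝ)..1, max (-f s) 0) / 2)) /
          (ε - (∫ s in (0:ℝ)..1, max (-f s) 0) / 2)) * (α - α₀)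
      + (∫ s in α₀..α, max (-f s) 0) ≤ y α := by
  have hsubset : Icc α₀ α ⊆ Icc 0 1 := Icc_subset_Icc hα₀.1.le hα.2.le
  have hIoo : Ioo α₀ α ⊆ Icc 0 1 := Ioo_subset_Icc_self.trans hsubset
  have hE : 0 ≤ ∫ s in (0 : ℝ)..1, max (-f s) 0 :=
    integral_nonneg zero_le_one fun _ _ ↦ le_max_right _ _
  have hnonpos : ∀ v ∈ uIcc α₀ α, f v ≤ 0 := by
    rw [uIcc_of_le hα₀.2.le]
    exact fun v hv ↦ hfneg v ⟨hα₀.1.le.trans hv.1, hv.2⟩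
  rw [integral_max_neg_zero_of_nonpos hnonpos, ← sub_eq_add_neg]
  exact stmt_16_general hα₀.2.le hc.le (div_nonneg hE zero_le_two)
    ((hf.mono hsubset).intervalIntegrable_of_Icc hα₀.2.le)
    (fun v hv ↦ (hyderiv v (hsubset hv)).continuousWithinAt.mono hsubset)
    (fun v hv ↦ (hyderiv v (hIoo hv)).mono_of_mem_nhdsWithin
      (Icc_mem_nhdsGT_of_mem ⟨(hIoo hv).1, hv.2.trans hα.2⟩))
    (fun v hv ↦ hsub v (hIoo hv))
    (fun v hv ↦ ⟨(hlower v hv).1.trans (hlower v hv).2, (hyrange v (hsubset hv)).2⟩)
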